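/- For a Moreau–Jean step with θ = 1/2 whose local velocities and impulse satisfy the discrete contact conditions, the discrete energy balance reduces to E(q_{k+1},v_{k+1}) − E(q_k,v_k) − W_ext − W_damp = P_{k+1}ᵀ U_{k+1/2} ≤ 0; in particular the scheme is always dissipative for θ = 1/2. -/

import Mathlib

open Matrix

/-!
Testing the momentum balance against `v_{k+θ}`, where `h v_{k+θ} = q_{k+1} - q_k`, turns the
inertial and the elastic term into energy increments, up to the numerical dissipation
`(1/2 - θ) (‖v_{k+1} - v_k‖²_M + ‖q_{k+1} - q_k‖²_K)`, which vanishes for `θ = 1/2`. What is left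
is the work of the impulses: a contact with nonzero impulse satisfies `U_{k+1} = -e U_k`, so its
share is `P (1 - e) U_k / 2`, which is nonpositive because `e ≤ 1` and `U_k ≤ 0 ≤ P`.
-/

open AffineMap (lineMap lineMap_apply_module)

section Algebra

variable {ι κ R : Type*} [Fintype ι]

lemma dotProduct_mulVec_comm_of_isSymm [CommSemiring R] {A : Matrix ι ι R} (hA : A.IsSymm)
    (x y : ι → R) : x ⬝ᵥ A *ᵥ y = y ⬝ᵥ A *ᵥ x := by
  simpa only [hA.eq] using dotProduct_transpose_mulVec A x y

lemma mulVec_lineMap [CommRing R] (A : Matrix κ ι R) (x y : ι → R) (θ : R) :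
    A *ᵥ lineMap x y θ = lineMap (A *ᵥ x) (A *ᵥ y) θ := by
  simp only [lineMap_apply_module, mulVec_add, mulVec_smul]

lemma lineMap_one_half_eq_smul_add_smul {V : Type*} [Field R] [NeZero (2 : R)] [AddCommGroup V]
    [Module R V] (x y : V) :
    lineMap x y (1 / 2 : R) = (1 / 2 : R) • x + (1 / 2 : R) • y := by
  rw [lineMap_apply_module, sub_half]

lemma half_dotProduct_mulVec_sub_half [Field R] [NeZero (2 : R)] {A : Matrix ι ι R}
    (hA : A.IsSymm) (x y : ι → R) (θ : R) :
    1 / 2 * (y ⬝ᵥ A *ᵥ y) - 1 / 2 * (x ⬝ᵥ A *ᵥ x) =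
      lineMap x y θ ⬝ᵥ A *ᵥ (y - x) + (1 / 2 - θ) * ((y - x) ⬝ᵥ A *ᵥ (y - x)) := by
  have cross : x ⬝ᵥ A *ᵥ y = y ⬝ᵥ A *ᵥ x := dotProduct_mulVec_comm_of_isSymm hA x y
  simp only [lineMap_apply_module, mulVec_sub, add_dotProduct, sub_dotProduct, dotProduct_sub,
    smul_dotProduct, smul_eq_mul]
  field_simp
  linear_combination -cross

end Algebra

section EnergyBalance

variable {ι κ 𝕜 : Type*} [Fintype ι] [Fintype κ] [Field 𝕜]
  {θ h : 𝕜} {M K C : Matrix ι ι 𝕜} {G : Matrix ι κ 𝕜} {F q q' v v' : ι → 𝕜} {P : κ → 𝕜}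

/-- The energy `E(q, v)`, kinetic plus elastic, of a system with mass matrix `M` and stiffness
matrix `K`. -/
def mechanicalEnergy (M K : Matrix ι ι 𝕜) (q v : ι → 𝕜) : 𝕜 :=
  1 / 2 * (v ⬝ᵥ M *ᵥ v) + 1 / 2 * (q ⬝ᵥ K *ᵥ q)

/-- The discrete work `W_ext` of the force `F` over a time step `h` at velocity `w`. -/
def externalWork (h : 𝕜) (w F : ι → 𝕜) : 𝕜 :=
  h * (w ⬝ᵥ F)

/-- The discrete work `W_damp` of the viscous force `-C w` over a time step `h` at velocity `w`. -/
def dampingWork (h : 𝕜) (C : Matrix ι ι 𝕜) (w : ι → 𝕜) : 𝕜 :=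
  -(h * (w ⬝ᵥ C *ᵥ w))

/-- A Moreau–Jean step from `(q, v)` to `(q', v')` under the force `F` and the contact impulse `P`;
the intermediate value `x_{k+θ}` is encoded as `AffineMap.lineMap x x' θ`. -/
structure IsMoreauJeanStep (θ h : 𝕜) (M K C : Matrix ι ι 𝕜) (G : Matrix ι κ 𝕜)
    (F q q' v v' : ι → 𝕜) (P : κ → 𝕜) : Prop where
  momentum : M *ᵥ (v' - v) + h • K *ᵥ lineMap q q' θ + h • C *ᵥ lineMap v v' θ - h • F = G *ᵥ P
  position : q' = q + h • lineMap v v' θ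

lemma IsMoreauJeanStep.dotProduct_momentum (step : IsMoreauJeanStep θ h M K C G F q q' v v' P) :
    lineMap v v' θ ⬝ᵥ M *ᵥ (v' - v) + (q' - q) ⬝ᵥ K *ᵥ lineMap q q' θ
      - dampingWork h C (lineMap v v' θ) - externalWork h (lineMap v v' θ) F =
      P ⬝ᵥ lineMap (Gᵀ *ᵥ v) (Gᵀ *ᵥ v') θ := by
  have displacement : q' - q = h • lineMap v v' θ := sub_eq_of_eq_add' step.position
  rw [← mulVec_lineMap, dotProduct_transpose_mulVec, ← step.momentum, displacement]
  simp only [dampingWork, externalWork, dotProduct_add, dotProduct_sub, dotProduct_smul,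
    smul_dotProduct, smul_eq_mul]
  ring

theorem IsMoreauJeanStep.energy_balance [NeZero (2 : 𝕜)] (hM : M.IsSymm) (hK : K.IsSymm)
    (step : IsMoreauJeanStep θ h M K C G F q q' v v' P) :
    mechanicalEnergy M K q' v' - mechanicalEnergy M K q v
      - externalWork h (lineMap v v' θ) F - dampingWork h C (lineMap v v' θ) =
      (1 / 2 - θ) * ((v' - v) ⬝ᵥ M *ᵥ (v' - v) + (q' - q) ⬝ᵥ K *ᵥ (q' - q))
        + P ⬝ᵥ lineMap (Gᵀ *ᵥ v) (Gᵀ *ᵥ v') θ := by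
  have kinetic := half_dotProduct_mulVec_sub_half hM v v' θ
  have elastic := half_dotProduct_mulVec_sub_half hK q q' θ
  rw [dotProduct_mulVec_comm_of_isSymm hK (lineMap q q' θ)] at elastic
  unfold mechanicalEnergy
  linear_combination kinetic + elastic + step.dotProduct_momentum

end EnergyBalance

section Impact

lemma impulse_mul_add_nonpos {R : Type*} [CommRing R] [PartialOrder R] [IsOrderedRing R]
    {e p u u' : R} (he : e ≤ 1) (hu : u ≤ 0) (hp : 0 ≤ p) (restitution : (u' + e * u) * p = 0) :
    p * (u + u') ≤ 0 :=
  calc p * (u + u') = p * (1 - e) * u := by linear_combination restitution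
    _ ≤ 0 := mul_nonpos_of_nonneg_of_nonpos (mul_nonneg hp (sub_nonneg.2 he)) hu

variable {ι κ 𝕜 : Type*} [Fintype ι] [Fintype κ] [Field 𝕜] [LinearOrder 𝕜]
  [IsStrictOrderedRing 𝕜]

lemma impulse_dotProduct_lineMap_one_half_nonpos {e P U U' : κ → 𝕜} {I₁ : Finset κ}
    (inactive : ∀ α ∉ I₁, P α = 0)
    (active : ∀ α ∈ I₁, e α ≤ 1 ∧ U α ≤ 0 ∧ 0 ≤ P α ∧ (U' α + e α * U α) * P α = 0) :
    P ⬝ᵥ lineMap U U' (1 / 2 : 𝕜) ≤ 0 := by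
  rw [lineMap_one_half_eq_smul_add_smul, ← smul_add, dotProduct_smul]
  refine smul_nonpos_of_nonneg_of_nonpos one_half_pos.le (Finset.sum_nonpos fun α _ ↦ ?_)
  by_cases hα : α ∈ I₁
  · obtain ⟨he, hU, hP, restitution⟩ := active α hα
    exact impulse_mul_add_nonpos he hU hP restitution
  · rw [inactive α hα, zero_mul]

theorem moreau_jean_theta_half_dissipative_general {h : 𝕜} {M K C : Matrix ι ι 𝕜}
    {G : Matrix ι κ 𝕜} {F q q' v v' : ι → 𝕜} {P e : κ → 𝕜} {I₁ : Finset κ}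
    (hM : M.IsSymm) (hK : K.IsSymm) (step : IsMoreauJeanStep (1 / 2) h M K C G F q q' v v' P)
    (inactive : ∀ α ∉ I₁, P α = 0)
    (active : ∀ α ∈ I₁, e α ≤ 1 ∧ (Gᵀ *ᵥ v) α ≤ 0 ∧ 0 ≤ P α ∧
      ((Gᵀ *ᵥ v') α + e α * (Gᵀ *ᵥ v) α) * P α = 0) :
    mechanicalEnergy M K q' v' - mechanicalEnergy M K q v
        - externalWork h (lineMap v v' (1 / 2 : 𝕜)) F
        - dampingWork h C (lineMap v v' (1 / 2 : 𝕜)) =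
        P ⬝ᵥ lineMap (Gᵀ *ᵥ v) (Gᵀ *ᵥ v') (1 / 2 : 𝕜) ∧
      P ⬝ᵥ lineMap (Gᵀ *ᵥ v) (Gᵀ *ᵥ v') (1 / 2 : 𝕜) ≤ 0 :=
  ⟨by simpa only [sub_self, zero_mul, zero_add] using step.energy_balance hM hK,
    impulse_dotProduct_lineMap_one_half_nonpos inactive active⟩

end Impact

/-- For `θ = 1/2`, the Moreau–Jean scheme energy balance reduces to the
(nonpositive) work of the contact impulses: it is always dissipative. -/
theorem moreau_jean_theta_half_dissipative
    (n m : ℕ) (hn : 1 ≤ n) (hm : 1 ≤ m)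
    (h : ℝ) (hh : 0 < h)
    (M K C : Matrix (Fin n) (Fin n) ℝ) (G : Matrix (Fin n) (Fin m) ℝ)
    (hM : M.PosDef) (hK : K.PosSemidef)
    (qk qk1 vk vk1 Fθ : Fin n → ℝ) (P : Fin m → ℝ)
    (heq : M.mulVec (vk1 - vk) + h • K.mulVec ((1/2 : ℝ) • qk + (1/2 : ℝ) • qk1)
        + h • C.mulVec ((1/2 : ℝ) • vk + (1/2 : ℝ) • vk1) - h • Fθ = G.mulVec P)
    (hq : qk1 = qk + h • ((1/2 : ℝ) • vk + (1/2 : ℝ) • vk1))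
    (e : Fin m → ℝ) (I₁ : Finset (Fin m))
    (he : ∀ α, 0 ≤ e α ∧ e α ≤ 1)
    (hPout : ∀ α ∉ I₁, P α = 0)
    (hc : ∀ α ∈ I₁, Gᵀ.mulVec vk α ≤ 0
        ∧ 0 ≤ Gᵀ.mulVec vk1 α + e α * Gᵀ.mulVec vk α
        ∧ 0 ≤ P α
        ∧ (Gᵀ.mulVec vk1 α + e α * Gᵀ.mulVec vk α) * P α = 0) :
    (1/2 * (vk1 ⬝ᵥ M.mulVec vk1) + 1/2 * (qk1 ⬝ᵥ K.mulVec qk1))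
      - (1/2 * (vk ⬝ᵥ M.mulVec vk) + 1/2 * (qk ⬝ᵥ K.mulVec qk))
      - h * (((1/2 : ℝ) • vk + (1/2 : ℝ) • vk1) ⬝ᵥ Fθ)
      - (-(h * (((1/2 : ℝ) • vk + (1/2 : ℝ) • vk1) ⬝ᵥ
          C.mulVec ((1/2 : ℝ) • vk + (1/2 : ℝ) • vk1))))
    = P ⬝ᵥ ((1/2 : ℝ) • (Gᵀ.mulVec vk + Gᵀ.mulVec vk1))
    ∧ P ⬝ᵥ ((1/2 : ℝ) • (Gᵀ.mulVec vk + Gᵀ.mulVec vk1)) ≤ 0 := by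
  simp only [smul_add (1 / 2 : ℝ) (Gᵀ *ᵥ vk), ← lineMap_one_half_eq_smul_add_smul] at heq hq ⊢
  exact moreau_jean_theta_half_dissipative_general (by simpa using hM.isHermitian)
    (by simpa using hK.isHermitian) ⟨heq, hq⟩ hPout
    fun α hα ↦ ⟨(he α).2, (hc α hα).1, (hc α hα).2.2⟩
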